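/- arXiv:2306.04792 — 2 statements merged into one kernel-verified Lean document; each statement's English description precedes it below -/
import Mathlib

section
/- In the randomized controlled trial model with responses, for every attribute a : N → {0,1} with |a| = #{i : a(i)=1} > 0 and every position k ∈ {1,…,s}: Pr(R_k = 1 | (T_k = 1) ∩ (A_k = 1)) = (1/|a|)·Σ_{i : a(i)=1} τ_i and Pr(R_k = 1 | (T_k = 0) ∩ (A_k = 1)) = (1/|a|)·Σ_{i : a(i)=1} ν_i, where A_k = a(i_k). -/
/- Randomized controlled trial model with responses:
   a uniformly random injective s-tuple of individuals from `Fin n`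
   (encoded as `Fin s ↪ Fin n`), an independent uniformly random t-element
   subset of positions `Fin s` (the treated positions), and, given these,
   independent Bernoulli responses at each position: position `k` responds
   with probability `τ (i_k)` if treated and `ν (i_k)` if untreated. -/

open Finset BigOperators
open scoped Classical

namespace RCT

/-- Probability weight of a sample point `(σ, T, R)`. -/
noncomputable def w (n s t : ℕ) (τ ν : Fin n → ℝ)
    (ω : (Fin s ↪ Fin n) × Finset (Fin s) × (Fin s → Bool)) : ℝ :=
  ((Fintype.card (Fin s ↪ Fin n) : ℝ))⁻¹ *
    (if ω.2.1.card = t then ((s.choose t : ℝ))⁻¹ else 0) *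
    ∏ k : Fin s,
      (if ω.2.2 k = true
        then (if k ∈ ω.2.1 then τ (ω.1 k) else ν (ω.1 k))
        else 1 - (if k ∈ ω.2.1 then τ (ω.1 k) else ν (ω.1 k)))

/-- Probability of an event. -/
noncomputable def Pr (n s t : ℕ) (τ ν : Fin n → ℝ)
    (E : (Fin s ↪ Fin n) × Finset (Fin s) × (Fin s → Bool) → Prop) : ℝ :=
  ∑ ω : (Fin s ↪ Fin n) × Finset (Fin s) × (Fin s → Bool),
    if E ω then w n s t τ ν ω else 0

/-- Conditional probability `Pr (E | F)`. -/
noncomputable def cPr (n s t : ℕ) (τ ν : Fin n → ℝ)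
    (E F : (Fin s ↪ Fin n) × Finset (Fin s) × (Fin s → Bool) → Prop) : ℝ :=
  Pr n s t τ ν (fun ω => E ω ∧ F ω) / Pr n s t τ ν F

/-- Expectation of a real-valued random variable. -/
noncomputable def Ex (n s t : ℕ) (τ ν : Fin n → ℝ)
    (f : (Fin s ↪ Fin n) × Finset (Fin s) × (Fin s → Bool) → ℝ) : ℝ :=
  ∑ ω : (Fin s ↪ Fin n) × Finset (Fin s) × (Fin s → Bool), w n s t τ ν ω * f ω

/-!
Given the sample `σ` and the treated set `T`, position `k` responds with probability `τ (σ k)` or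
`ν (σ k)`, according to whether `k ∈ T`. The individual `σ k` is uniformly distributed, because
permuting the population permutes the samples, and it is independent of `T`. So, once `T` is
confined to one arm of the trial, the numerator and the denominator of the conditional probability
are both the probability of that arm times an average over the population, and this common factor
cancels.
-/

section Averages

variable {X Y M : Type*} [Fintype X] [Fintype Y] [AddCommMonoid M] [Module ℚ≥0 M]

theorem expect_comp_eq_of_card_fiber_eq [DecidableEq Y] [Nonempty X] {φ : X → Y}
    (hφ : ∀ y y', #{x | φ x = y} = #{x | φ x = y'}) (f : Y → M) :
    𝔼 x, f (φ x) = 𝔼 y, f y := by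
  obtain ⟨x₀⟩ := ‹Nonempty X›
  set c := #{x | φ x = φ x₀}
  have hfiber (y : Y) : #{x | φ x = y} = c := hφ y (φ x₀)
  have hc : (c : ℚ≥0) ≠ 0 := Nat.cast_ne_zero.2 (card_ne_zero_of_mem (by simp : x₀ ∈ _))
  have hcard : Fintype.card X = Fintype.card Y * c := by
    rw [← card_univ, card_eq_sum_card_fiberwise (f := φ) (t := univ) (by simp)]
    simp [hfiber]
  have hsum : ∑ x, f (φ x) = (c : ℚ≥0) • ∑ y, f y := by
    rw [← sum_fiberwise univ φ, smul_sum]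
    refine sum_congr rfl fun y _ ↦ ?_
    rw [sum_congr rfl fun x hx ↦ congrArg f (mem_filter.1 hx).2, sum_const, hfiber,
      Nat.cast_smul_eq_nsmul]
  rw [expect_univ, expect_univ, hsum, hcard, smul_smul, Nat.cast_mul, mul_inv,
    inv_mul_cancel_right₀ hc]

theorem card_embedding_apply_eq [DecidableEq Y] (x : X) (y y' : Y) :
    #{σ : X ↪ Y | σ x = y} = #{σ : X ↪ Y | σ x = y'} :=
  card_equiv (Equiv.embeddingCongr (Equiv.refl X) (Equiv.swap y y')) fun σ ↦ by
    simp [Equiv.embeddingCongr, Equiv.swap_apply_eq_iff]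

theorem expect_embedding_apply [Nonempty (X ↪ Y)] (x : X) (f : Y → M) :
    𝔼 σ : X ↪ Y, f (σ x) = 𝔼 y, f y :=
  expect_comp_eq_of_card_fiber_eq (card_embedding_apply_eq x) f

end Averages

section Bernoulli

variable {ι R : Type*} [Fintype ι] [DecidableEq ι] [CommRing R] (p : ι → R)

theorem sum_prod_bernoulli :
    ∑ r : ι → Bool, ∏ j, (if r j = true then p j else 1 - p j) = 1 := by
  rw [← Fintype.piFinset_univ,
    ← prod_univ_sum (fun _ ↦ univ) fun j b ↦ if b = true then p j else 1 - p j]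
  simp

theorem sum_prod_bernoulli_of_apply_eq_true (k : ι) :
    ∑ r : ι → Bool with r k = true, ∏ j, (if r j = true then p j else 1 - p j) = p k := by
  have hcylinder : ({r | r k = true} : Finset (ι → Bool)) =
      Fintype.piFinset fun j ↦ if j = k then {true} else univ := by
    ext r
    simp only [mem_filter_univ, Fintype.mem_piFinset]
    exact ⟨fun hr j ↦ by split_ifs with hj <;> simp [hj, hr], fun hr ↦ by simpa using hr k⟩
  rw [hcylinder, ← prod_univ_sum _ fun j b ↦ if b = true then p j else 1 - p j,
    Fintype.prod_eq_single k fun j hj ↦ by simp [hj]]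
  simp

end Bernoulli

section CardinalityConstraints

variable {α : Type*} [Fintype α] {t : ℕ}

theorem exists_card_eq_and_mem (ht : 0 < t) (htα : t ≤ Fintype.card α) (x : α) :
    ∃ T : Finset α, #T = t ∧ x ∈ T := by
  obtain ⟨T, hxT, -, hT⟩ := exists_subsuperset_card_eq (subset_univ {x})
    (Nat.succ_le_of_lt ht) htα
  exact ⟨T, hT, singleton_subset_iff.1 hxT⟩

theorem exists_card_eq_and_notMem (htα : t < Fintype.card α) (x : α) :
    ∃ T : Finset α, #T = t ∧ x ∉ T := by
  obtain ⟨T, hTx, hT⟩ := exists_subset_card_eq (s := {x}ᶜ) (n := t)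
    (by rw [card_compl, card_singleton]; omega)
  exact ⟨T, hT, fun hx ↦ by simpa using hTx hx⟩

end CardinalityConstraints

section Trial

variable {n s t : ℕ} {τ ν : Fin n → ℝ}

/-- The probability that position `k` responds when the treated positions are `T` and individual `i`
occupies position `k`. -/
noncomputable def responseProb (τ ν : Fin n → ℝ) (T : Finset (Fin s)) (k : Fin s) (i : Fin n) : ℝ :=
  if k ∈ T then τ i else ν i

/-- The probability that a uniformly random `t`-element set of positions satisfies `P`. -/
noncomputable def assignmentProb (t : ℕ) (P : Finset (Fin s) → Prop) : ℝ :=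
  𝔼 T ∈ powersetCard t univ, if P T then 1 else 0

theorem Pr_eq_expect (E : (Fin s ↪ Fin n) × Finset (Fin s) × (Fin s → Bool) → Prop) :
    Pr n s t τ ν E = 𝔼 σ : Fin s ↪ Fin n, 𝔼 T ∈ powersetCard t univ,
      ∑ r with E (σ, T, r), ∏ j, (if r j = true then responseProb τ ν T j (σ j)
        else 1 - responseProb τ ν T j (σ j)) := by
  simp only [Pr, w, Fintype.sum_prod_type, expect_eq_sum_div_card, card_univ, div_eq_inv_mul,
    mul_sum, powersetCard_eq_filter, powerset_univ, sum_filter, responseProb]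
  refine sum_congr rfl fun σ _ ↦ sum_congr rfl fun T _ ↦ ?_
  split_ifs with hT
  · simp [mul_sum, mul_assoc]
  · simp

theorem Pr_design (D : (Fin s ↪ Fin n) → Finset (Fin s) → Prop)
    [∀ σ T, Decidable (D σ T)] :
    Pr n s t τ ν (fun ω ↦ D ω.1 ω.2.1) =
      𝔼 σ : Fin s ↪ Fin n, 𝔼 T ∈ powersetCard t univ, if D σ T then 1 else 0 := by
  rw [Pr_eq_expect]
  refine expect_congr rfl fun σ _ ↦ expect_congr rfl fun T _ ↦ ?_
  by_cases hD : D σ T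
  · simp [hD, sum_prod_bernoulli]
  · simp [hD]

theorem Pr_response_and_design (D : (Fin s ↪ Fin n) → Finset (Fin s) → Prop)
    [∀ σ T, Decidable (D σ T)] (k : Fin s) :
    Pr n s t τ ν (fun ω ↦ ω.2.2 k = true ∧ D ω.1 ω.2.1) =
      𝔼 σ : Fin s ↪ Fin n, 𝔼 T ∈ powersetCard t univ,
        if D σ T then responseProb τ ν T k (σ k) else 0 := by
  rw [Pr_eq_expect]
  refine expect_congr rfl fun σ _ ↦ expect_congr rfl fun T _ ↦ ?_
  by_cases hD : D σ T
  · simp [hD, sum_prod_bernoulli_of_apply_eq_true]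
  · simp [hD]

theorem expect_expect_ite_eq_assignmentProb_mul (hsn : s ≤ n) (P : Finset (Fin s) → Prop)
    (A : Fin n → Prop) [DecidablePred A] (q : Fin n → ℝ) (k : Fin s) :
    𝔼 σ : Fin s ↪ Fin n, 𝔼 T ∈ powersetCard t univ, (if P T ∧ A (σ k) then q (σ k) else 0) =
      assignmentProb t P * 𝔼 i, if A i then q i else 0 := by
  have : Nonempty (Fin s ↪ Fin n) := ⟨Fin.castLEEmb hsn⟩
  rw [← expect_embedding_apply k fun i ↦ if A i then q i else 0, mul_comm, assignmentProb,
    expect_mul_expect]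
  simp [ite_and]

theorem assignmentProb_pos {P : Finset (Fin s) → Prop} (hP : ∃ T, #T = t ∧ P T) :
    0 < assignmentProb t P := by
  obtain ⟨T, hT, hPT⟩ := hP
  exact expect_pos' (fun _ _ ↦ by positivity) ⟨T, by simp [hT], by simp [hPT]⟩

theorem cPr_response_given_assignment_and_individual (hsn : s ≤ n) {P : Finset (Fin s) → Prop}
    (hP : ∃ T, #T = t ∧ P T) {A : Fin n → Prop} [DecidablePred A] (hA : ∃ i, A i) {k : Fin s}
    {q : Fin n → ℝ} (hq : ∀ T, P T → responseProb τ ν T k = q) :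
    cPr n s t τ ν (fun ω ↦ ω.2.2 k = true) (fun ω ↦ P ω.2.1 ∧ A (ω.1 k)) =
      (1 / (#{i | A i} : ℝ)) * ∑ i with A i, q i := by
  have hnum : Pr n s t τ ν (fun ω ↦ ω.2.2 k = true ∧ P ω.2.1 ∧ A (ω.1 k)) =
      assignmentProb t P * 𝔼 i, if A i then q i else 0 := by
    rw [Pr_response_and_design fun σ T ↦ P T ∧ A (σ k),
      ← expect_expect_ite_eq_assignmentProb_mul hsn P A q k]
    refine expect_congr rfl fun σ _ ↦ expect_congr rfl fun T _ ↦ ?_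
    exact if_ctx_congr Iff.rfl (fun h ↦ congrFun (hq T h.1) (σ k)) fun _ ↦ rfl
  have hden : Pr n s t τ ν (fun ω ↦ P ω.2.1 ∧ A (ω.1 k)) =
      assignmentProb t P * 𝔼 i, if A i then 1 else 0 := by
    rw [Pr_design fun σ T ↦ P T ∧ A (σ k),
      expect_expect_ite_eq_assignmentProb_mul hsn P A fun _ ↦ 1]
  have hcard : (#{i | A i} : ℝ) ≠ 0 := by
    simpa [filter_eq_empty_iff] using hA
  have hden_ne : assignmentProb t P * 𝔼 i, (if A i then (1 : ℝ) else 0) ≠ 0 := by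
    obtain ⟨i, hi⟩ := hA
    exact (mul_pos (assignmentProb_pos hP)
      (expect_pos' (fun _ _ ↦ by positivity) ⟨i, mem_univ i, by simp [hi]⟩)).ne'
  rw [cPr, hnum, hden, div_eq_iff hden_ne, Fintype.expect_eq_sum_div_card,
    Fintype.expect_eq_sum_div_card, ← sum_filter, sum_boole]
  field_simp

end Trial

/-- Conditional response probabilities given treatment status and `A_k = 1`:
`Pr(R_k = 1 | (T_k = 1) ∩ (A_k = 1)) = (1/|a|)·Σ_{i : a i = 1} τ i` and
`Pr(R_k = 1 | (T_k = 0) ∩ (A_k = 1)) = (1/|a|)·Σ_{i : a i = 1} ν i`. -/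
theorem response_given_treatment_and_attribute_one (n s t : ℕ) (ht : 0 < t) (hts : t < s) (hsn : s ≤ n)
    (τ ν : Fin n → ℝ) (hτ : ∀ i, τ i ∈ Set.Icc (0 : ℝ) 1) (hν : ∀ i, ν i ∈ Set.Icc (0 : ℝ) 1)
    (a : Fin n → Fin 2) (ha : 0 < (univ.filter (fun i => a i = 1)).card) (k : Fin s) :
    cPr n s t τ ν (fun ω => ω.2.2 k = true) (fun ω => k ∈ ω.2.1 ∧ a (ω.1 k) = 1) =
      (1 / ((univ.filter (fun i => a i = 1)).card : ℝ)) *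
        ∑ i ∈ univ.filter (fun i => a i = 1), τ i ∧
    cPr n s t τ ν (fun ω => ω.2.2 k = true) (fun ω => k ∉ ω.2.1 ∧ a (ω.1 k) = 1) =
      (1 / ((univ.filter (fun i => a i = 1)).card : ℝ)) *
        ∑ i ∈ univ.filter (fun i => a i = 1), ν i := by
  have hA : ∃ i, a i = 1 := by simpa [card_pos, Finset.Nonempty] using ha
  have htreated := exists_card_eq_and_mem ht (by simpa using hts.le) k
  have huntreated := exists_card_eq_and_notMem (by simpa using hts) k
  exact ⟨cPr_response_given_assignment_and_individual hsn htreated hA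
      fun _ hkT ↦ funext fun _ ↦ if_pos hkT,
    cPr_response_given_assignment_and_individual hsn huntreated hA
      fun _ hkT ↦ funext fun _ ↦ if_neg hkT⟩

end RCT
end

section
/- In the randomized controlled trial model with responses, for every attribute a : N → {0,1} with |a| = #{i : a(i)=1} < n and every position k ∈ {1,…,s}: Pr(R_k = 1 | (T_k = 1) ∩ (A_k = 0)) = (1/(n−|a|))·Σ_{i : a(i)=0} τ_i and Pr(R_k = 1 | (T_k = 0) ∩ (A_k = 0)) = (1/(n−|a|))·Σ_{i : a(i)=0} ν_i, where A_k = a(i_k). -/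
/- Randomized controlled trial model with responses:
   a uniformly random injective s-tuple of individuals from `Fin n`
   (encoded as `Fin s ↪ Fin n`), an independent uniformly random t-element
   subset of positions `Fin s` (the treated positions), and, given these,
   independent Bernoulli responses at each position: position `k` responds
   with probability `τ (i_k)` if treated and `ν (i_k)` if untreated. -/

open Finset BigOperators
open scoped Classical

namespace RCT

/-!
Averaging over permutations shows that the individual `i_k` at position `k` is uniform on the
population and that `k` is treated with probability `t / s`; summing out the other responses, `R_k`
is Bernoulli with the rate of the individual and its arm. So the triple `(i_k, T_k, R_k)` has an
explicit law in which `i_k` and `T_k` are independent, and conditioning on the arm and on an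
attribute value leaves the uniform average of the arm's rates over the individuals with that value.
-/

section Averaging

variable {ι κ M : Type*} [Fintype ι] [AddCommMonoid M] [Module ℚ≥0 M]

theorem expect_smul_eq_expect {G : Type*} [Group G] [Fintype G] [MulAction G ι]
    [MulAction.IsPretransitive G ι] (f : ι → M) (i : ι) : 𝔼 g : G, f (g • i) = 𝔼 j, f j := by
  have : Nonempty ι := ⟨i⟩
  have orbit_average_const (j : ι) : 𝔼 g : G, f (g • i) = 𝔼 g : G, f (g • j) := by
    obtain ⟨h, rfl⟩ := MulAction.exists_smul_eq G j i
    exact Fintype.expect_equiv (Equiv.mulRight h) _ _ fun g => by simp [mul_smul]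
  calc 𝔼 g : G, f (g • i)
      = 𝔼 j, 𝔼 g : G, f (g • j) := by simp only [← orbit_average_const, Fintype.expect_const]
    _ = 𝔼 g : G, 𝔼 j, f (g • j) := expect_comm _ _ _
    _ = 𝔼 _g : G, 𝔼 j, f j := expect_congr rfl fun g _ =>
        Fintype.expect_equiv (MulAction.toPerm g) _ _ fun _ => rfl
    _ = 𝔼 j, f j := Fintype.expect_const _

theorem expect_embedding_apply_s9 [Fintype κ] [Nonempty (κ ↪ ι)] (f : ι → M) (k : κ) :
    𝔼 σ : κ ↪ ι, f (σ k) = 𝔼 i, f i :=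
  calc 𝔼 σ : κ ↪ ι, f (σ k)
      = 𝔼 _π : Equiv.Perm ι, 𝔼 σ : κ ↪ ι, f (σ k) := (Fintype.expect_const _).symm
    _ = 𝔼 π : Equiv.Perm ι, 𝔼 σ : κ ↪ ι, f (π • σ k) := expect_congr rfl fun π _ =>
        (Fintype.expect_equiv (MulAction.toPerm π) _ _ fun _ => rfl).symm
    _ = 𝔼 σ : κ ↪ ι, 𝔼 π : Equiv.Perm ι, f (π • σ k) := expect_comm _ _ _
    _ = 𝔼 i, f i := by simp only [expect_smul_eq_expect, Fintype.expect_const]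

theorem expect_powersetCard_decide_mem_eq_expect_expect [DecidableEq ι] (t : ℕ)
    (f : Bool → M) (k : ι) :
    𝔼 T ∈ powersetCard t (univ : Finset ι), f (decide (k ∈ T)) =
      𝔼 T ∈ powersetCard t (univ : Finset ι), 𝔼 j, f (decide (j ∈ T)) :=
  calc 𝔼 T ∈ powersetCard t (univ : Finset ι), f (decide (k ∈ T))
      = 𝔼 _π : Equiv.Perm ι, 𝔼 T ∈ powersetCard t (univ : Finset ι), f (decide (k ∈ T)) :=
        (Fintype.expect_const _).symm
    _ = 𝔼 π : Equiv.Perm ι, 𝔼 T ∈ powersetCard t (univ : Finset ι), f (decide (π • k ∈ T)) :=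
        expect_congr rfl fun π _ => expect_equiv π.finsetCongr (by simp) (by simp)
    _ = 𝔼 T ∈ powersetCard t (univ : Finset ι), 𝔼 π : Equiv.Perm ι, f (decide (π • k ∈ T)) :=
        expect_comm _ _ _
    _ = 𝔼 T ∈ powersetCard t (univ : Finset ι), 𝔼 j, f (decide (j ∈ T)) :=
        expect_congr rfl fun T _ => expect_smul_eq_expect (fun j => f (decide (j ∈ T))) k

end Averaging

section Bernoulli

variable {ι R : Type*} [Fintype ι]

/-- The Bernoulli law on `Bool` with success probability `p`, as a weight function with values in
any ring; it describes both the treatment indicator and the responses. -/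
def bernoulliMass [Ring R] (p : R) (b : Bool) : R :=
  if b = true then p else 1 - p

theorem sum_bernoulliMass [Ring R] (p : R) : ∑ b, bernoulliMass p b = 1 := by
  simp [bernoulliMass]

theorem bernoulliMass_div_ne_zero [Field R] [CharZero R] {s t : ℕ} (ht : 0 < t)
    (hts : t < s) (b : Bool) : bernoulliMass ((t : R) / s) b ≠ 0 := by
  have hs : (s : R) ≠ 0 := by exact_mod_cast (ht.trans hts).ne'
  have hpos : (t : R) / s ≠ 0 := div_ne_zero (by exact_mod_cast ht.ne') hs
  have hlt : (t : R) / s ≠ 1 := by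
    rw [Ne, div_eq_one_iff_eq hs]
    exact_mod_cast hts.ne
  cases b
  · simpa [bernoulliMass, sub_eq_zero] using hlt.symm
  · simpa [bernoulliMass] using hpos

theorem sum_prod_bernoulliMass_mul_apply [DecidableEq ι] [CommRing R] (p : ι → R)
    (f : Bool → R) (k : ι) :
    ∑ r : ι → Bool, (∏ j, bernoulliMass (p j) (r j)) * f (r k) =
      ∑ b, bernoulliMass (p k) b * f b := by
  have apply_eq_prod (r : ι → Bool) : f (r k) = ∏ j, if j = k then f (r j) else 1 := by simp
  calc ∑ r : ι → Bool, (∏ j, bernoulliMass (p j) (r j)) * f (r k)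
      = ∑ r : ι → Bool, ∏ j, bernoulliMass (p j) (r j) * (if j = k then f (r j) else 1) := by
        simp only [apply_eq_prod, prod_mul_distrib]
    _ = ∏ j, ∑ b, bernoulliMass (p j) b * (if j = k then f b else 1) := by
        rw [prod_univ_sum, Fintype.piFinset_univ]
    _ = ∑ b, bernoulliMass (p k) b * f b := by
        rw [Fintype.prod_eq_single k fun j hj => by simpa [hj] using sum_bernoulliMass (p j)]
        simp

theorem expect_decide_mem [DecidableEq ι] [Nonempty ι] [Field R] [CharZero R] (T : Finset ι)
    (f : Bool → R) :
    𝔼 j, f (decide (j ∈ T)) = ∑ b, bernoulliMass ((#T : R) / Fintype.card ι) b * f b := by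
  have split_sum : ∑ j, f (decide (j ∈ T)) = #T * f true + (Fintype.card ι - #T) * f false := by
    rw [← sum_add_sum_compl T, sum_congr rfl fun j hj => by rw [decide_eq_true hj],
      sum_congr (s₁ := Tᶜ) rfl fun j hj => by rw [decide_eq_false (mem_compl.mp hj)]]
    simp [card_compl, Nat.cast_sub (card_le_univ T)]
  rw [Fintype.expect_eq_sum_div_card, split_sum]
  simp only [bernoulliMass, Fintype.sum_bool, reduceIte, Bool.false_eq_true]
  field_simp

theorem expect_powersetCard_decide_mem [DecidableEq ι] [Field R] [CharZero R] {t : ℕ}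
    (ht : t ≤ Fintype.card ι) (f : Bool → R) (k : ι) :
    𝔼 T ∈ powersetCard t (univ : Finset ι), f (decide (k ∈ T)) =
      ∑ b, bernoulliMass ((t : R) / Fintype.card ι) b * f b := by
  have : Nonempty ι := ⟨k⟩
  rw [expect_powersetCard_decide_mem_eq_expect_expect, expect_congr rfl fun T hT => by
    rw [expect_decide_mem, (mem_powersetCard.mp hT).2]]
  exact expect_const (powersetCard_nonempty.mpr ht) _

end Bernoulli

section Law

variable {n s t : ℕ} {τ ν : Fin n → ℝ}

/-- The response probability of individual `i` in the arm `b`, where `true` is the treatment arm. -/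
def armRate (τ ν : Fin n → ℝ) (b : Bool) (i : Fin n) : ℝ :=
  if b = true then τ i else ν i

theorem Ex_eq_expect (f : (Fin s ↪ Fin n) × Finset (Fin s) × (Fin s → Bool) → ℝ) :
    Ex n s t τ ν f = 𝔼 σ : Fin s ↪ Fin n, 𝔼 T ∈ powersetCard t (univ : Finset (Fin s)),
      ∑ r : Fin s → Bool,
        (∏ j, bernoulliMass (armRate τ ν (decide (j ∈ T)) (σ j)) (r j)) * f (σ, T, r) := by
  simp only [Ex, w, Fintype.sum_prod_type, expect_eq_sum_div_card, card_powersetCard, card_univ,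
    Fintype.card_fin, sum_div, bernoulliMass, armRate, decide_eq_true_eq]
  simp only [powersetCard_eq_filter, powerset_univ, sum_filter]
  refine sum_congr rfl fun σ _ => sum_congr rfl fun T _ => ?_
  by_cases hT : #T = t
  · simp only [if_pos hT]
    exact sum_congr rfl fun r _ => by ring
  · simp [hT]

theorem Ex_position (hts : t ≤ s) (hsn : s ≤ n) (k : Fin s) (f : Fin n → Bool → Bool → ℝ) :
    Ex n s t τ ν (fun ω => f (ω.1 k) (decide (k ∈ ω.2.1)) (ω.2.2 k)) =
      𝔼 i, ∑ b, bernoulliMass ((t : ℝ) / s) b *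
        ∑ r, bernoulliMass (armRate τ ν b i) r * f i b r := by
  have : Nonempty (Fin s ↪ Fin n) := ⟨Fin.castLEEmb hsn⟩
  have treatment_law (g : Bool → ℝ) :
      𝔼 T ∈ powersetCard t (univ : Finset (Fin s)), g (decide (k ∈ T)) =
        ∑ b, bernoulliMass ((t : ℝ) / s) b * g b := by
    simpa only [Fintype.card_fin] using
      expect_powersetCard_decide_mem (hts.trans_eq (Fintype.card_fin s).symm) g k
  simp only [Ex_eq_expect, ← treatment_law]
  rw [← expect_embedding_apply_s9 (fun i => 𝔼 T ∈ powersetCard t (univ : Finset (Fin s)),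
    ∑ r, bernoulliMass (armRate τ ν (decide (k ∈ T)) i) r * f i (decide (k ∈ T)) r) k]
  exact expect_congr rfl fun σ _ => expect_congr rfl fun T _ =>
    sum_prod_bernoulliMass_mul_apply _ (f (σ k) (decide (k ∈ T))) k

theorem Pr_position (hts : t ≤ s) (hsn : s ≤ n) (k : Fin s) (P : Fin n → Bool → Bool → Prop)
    [∀ i b r, Decidable (P i b r)] :
    Pr n s t τ ν (fun ω => P (ω.1 k) (decide (k ∈ ω.2.1)) (ω.2.2 k)) =
      𝔼 i, ∑ b, bernoulliMass ((t : ℝ) / s) b *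
        ∑ r, bernoulliMass (armRate τ ν b i) r * if P i b r then 1 else 0 := by
  rw [← Ex_position hts hsn k fun i b r => if P i b r then 1 else 0]
  simp only [Pr, Ex, mul_ite, mul_one, mul_zero]
  congr!

variable {α : Type*}

theorem Pr_arm_and_attribute [DecidableEq α] (hts : t ≤ s) (hsn : s ≤ n) (k : Fin s)
    (b : Bool) (a : Fin n → α) (x : α) :
    Pr n s t τ ν (fun ω => decide (k ∈ ω.2.1) = b ∧ a (ω.1 k) = x) =
      bernoulliMass ((t : ℝ) / s) b * (#{i | a i = x} / n) := by
  rw [Pr_position hts hsn k fun i c _ => c = b ∧ a i = x]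
  simp only [← sum_mul, sum_bernoulliMass, one_mul]
  simp only [ite_and, mul_ite, mul_zero, mul_one, sum_ite_eq', mem_univ, if_true]
  rw [Fintype.expect_eq_sum_div_card, ← sum_filter, sum_const, nsmul_eq_mul, Fintype.card_fin]
  ring

theorem Pr_response_and_arm_and_attribute [DecidableEq α] (hts : t ≤ s) (hsn : s ≤ n)
    (k : Fin s) (b : Bool) (a : Fin n → α) (x : α) :
    Pr n s t τ ν (fun ω => ω.2.2 k = true ∧ decide (k ∈ ω.2.1) = b ∧ a (ω.1 k) = x) =
      bernoulliMass ((t : ℝ) / s) b * ((∑ i with a i = x, armRate τ ν b i) / n) := by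
  rw [Pr_position hts hsn k fun i c r => r = true ∧ c = b ∧ a i = x]
  simp only [ite_and, mul_ite, mul_zero, mul_one, sum_ite_eq', mem_univ, if_true]
  rw [Fintype.expect_eq_sum_div_card, ← sum_filter, ← mul_sum, Fintype.card_fin, mul_div_assoc]
  simp only [bernoulliMass, if_true]

theorem Pr_arm_and_attribute_ne_zero (ht : 0 < t) (hts : t < s) (hsn : s ≤ n) (k : Fin s)
    (b : Bool) (a : Fin n → α) (x : α) (hx : ∃ i, a i = x) :
    Pr n s t τ ν (fun ω => decide (k ∈ ω.2.1) = b ∧ a (ω.1 k) = x) ≠ 0 := by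
  obtain ⟨i, hi⟩ := hx
  have population_ne_zero : (n : ℝ) ≠ 0 := by exact_mod_cast i.pos.ne'
  have attribute_card_ne_zero : (#{i | a i = x} : ℝ) ≠ 0 := by
    exact_mod_cast card_ne_zero_of_mem (mem_filter.mpr ⟨mem_univ i, hi⟩)
  rw [Pr_arm_and_attribute hts.le hsn]
  exact mul_ne_zero (bernoulliMass_div_ne_zero ht hts b)
    (div_ne_zero attribute_card_ne_zero population_ne_zero)

theorem cPr_response_given_arm_and_attribute [DecidableEq α] (ht : 0 < t) (hts : t < s)
    (hsn : s ≤ n) (k : Fin s) (b : Bool) (a : Fin n → α) (x : α) (hx : ∃ i, a i = x) :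
    cPr n s t τ ν (fun ω => ω.2.2 k = true) (fun ω => decide (k ∈ ω.2.1) = b ∧ a (ω.1 k) = x) =
      𝔼 i with a i = x, armRate τ ν b i := by
  rw [cPr, div_eq_iff (Pr_arm_and_attribute_ne_zero ht hts hsn k b a x hx),
    Pr_arm_and_attribute hts.le hsn, Pr_response_and_arm_and_attribute hts.le hsn,
    ← card_mul_expect]
  ring

end Law

theorem response_given_treatment_and_attribute_zero_general {α : Type*} [DecidableEq α]
    (n s t : ℕ) (ht : 0 < t) (hts : t < s) (hsn : s ≤ n) (τ ν : Fin n → ℝ)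
    (a : Fin n → α) (x : α) (hx : ∃ i, a i = x) (k : Fin s) :
    cPr n s t τ ν (fun ω => ω.2.2 k = true) (fun ω => k ∈ ω.2.1 ∧ a (ω.1 k) = x) =
      𝔼 i with a i = x, τ i ∧
    cPr n s t τ ν (fun ω => ω.2.2 k = true) (fun ω => k ∉ ω.2.1 ∧ a (ω.1 k) = x) =
      𝔼 i with a i = x, ν i := by
  have arm (b : Bool) :=
    cPr_response_given_arm_and_attribute (τ := τ) (ν := ν) ht hts hsn k b a x hx
  exact ⟨by simpa [armRate] using arm true, by simpa [armRate] using arm false⟩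

section BinaryAttribute

variable {ι : Type*} [Fintype ι] (a : ι → Fin 2)

theorem card_filter_eq_zero_add_card_filter_eq_one :
    #{i | a i = 0} + #{i | a i = 1} = Fintype.card ι := by
  simpa using (card_eq_sum_card_fiberwise (s := univ) (t := univ) (f := a) (by simp)).symm

theorem exists_eq_zero_of_card_filter_eq_one_lt (ha : #{i | a i = 1} < Fintype.card ι) :
    ∃ i, a i = 0 := by
  have zeros_pos : 0 < #{i | a i = 0} := by
    have := card_filter_eq_zero_add_card_filter_eq_one a
    omega
  simpa [card_pos, filter_nonempty_iff] using zeros_pos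

theorem expect_filter_eq_zero {K : Type*} [Field K] [CharZero K] (f : ι → K) :
    𝔼 i with a i = 0, f i =
      1 / ((Fintype.card ι : K) - #{i | a i = 1}) * ∑ i with a i = 0, f i := by
  rw [expect_eq_sum_div_card, ← card_filter_eq_zero_add_card_filter_eq_one a, Nat.cast_add,
    add_sub_cancel_right, one_div, inv_mul_eq_div]

end BinaryAttribute

/-- Conditional response probabilities given treatment status and `A_k = 0`:
`Pr(R_k = 1 | (T_k = 1) ∩ (A_k = 0)) = (1/(n−|a|))·Σ_{i : a i = 0} τ i` and
`Pr(R_k = 1 | (T_k = 0) ∩ (A_k = 0)) = (1/(n−|a|))·Σ_{i : a i = 0} ν i`. -/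
theorem response_given_treatment_and_attribute_zero (n s t : ℕ) (ht : 0 < t) (hts : t < s) (hsn : s ≤ n)
    (τ ν : Fin n → ℝ) (hτ : ∀ i, τ i ∈ Set.Icc (0 : ℝ) 1) (hν : ∀ i, ν i ∈ Set.Icc (0 : ℝ) 1)
    (a : Fin n → Fin 2) (ha : (univ.filter (fun i => a i = 1)).card < n) (k : Fin s) :
    cPr n s t τ ν (fun ω => ω.2.2 k = true) (fun ω => k ∈ ω.2.1 ∧ a (ω.1 k) = 0) =
      (1 / ((n : ℝ) - ((univ.filter (fun i => a i = 1)).card : ℝ))) *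
        ∑ i ∈ univ.filter (fun i => a i = 0), τ i ∧
    cPr n s t τ ν (fun ω => ω.2.2 k = true) (fun ω => k ∉ ω.2.1 ∧ a (ω.1 k) = 0) =
      (1 / ((n : ℝ) - ((univ.filter (fun i => a i = 1)).card : ℝ))) *
        ∑ i ∈ univ.filter (fun i => a i = 0), ν i := by
  have exists_zero := exists_eq_zero_of_card_filter_eq_one_lt a (by simpa using ha)
  simpa only [expect_filter_eq_zero, Fintype.card_fin] using
    response_given_treatment_and_attribute_zero_general n s t ht hts hsn τ ν a 0 exists_zero k

end RCT
end
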